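/- For every 0 < ε < 1 and β > 0 there exists a constant C > 0 such that for every integer n ≥ 2, every integer S ≥ 1, and every Q ∈ M_S, there exists an estimator L̂ : ℕ^S → ℝ such that, in the Poisson sampling model with sample size n, sup_{P ∈ M_S} E_P (L̂(X) − L_1(P,Q))² ≤ C·[ (Σ_{i=1}^S min{q_i, √(q_i/(n ln n))})² + (ln n)/n^{1−ε} + S/n^β ]. -/

import Mathlib

open scoped BigOperators ENNReal

/-- The Poisson(lam) probability mass function on the nonnegative integers. -/
noncomputable def poissonPMF (lam : ℝ) (k : ℕ) : ℝ :=
  Real.exp (-lam) * lam ^ k / (Nat.factorial k)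

/-- `P` is a probability vector on `{1,…,S}` (an element of `M_S`). -/
def IsDist {S : ℕ} (p : Fin S → ℝ) : Prop :=
  (∀ i, 0 ≤ p i) ∧ ∑ i, p i = 1

/-- Joint pmf of `S` independent coordinates `X_i ~ Poisson(n p_i)` (Poisson sampling model). -/
noncomputable def prodPMF {S : ℕ} (n : ℕ) (p : Fin S → ℝ) (x : Fin S → ℕ) : ℝ :=
  ∏ i, poissonPMF (n * p i) (x i)

/-- The `L₁` distance between two vectors. -/
noncomputable def L1dist {S : ℕ} (p q : Fin S → ℝ) : ℝ :=
  ∑ i, |p i - q i|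

/-- The mean squared error `E_P (est(X) - L)²` in the Poisson sampling model, valued in `ℝ≥0∞`. -/
noncomputable def risk {S : ℕ} (n : ℕ) (p : Fin S → ℝ) (L : ℝ) (est : (Fin S → ℕ) → ℝ) : ℝ≥0∞ :=
  ∑' x : Fin S → ℕ, ENNReal.ofReal (prodPMF n p x * (est x - L) ^ 2)

/-!
Write `|p - q| = (p - q) + 2 (q - p)₊`. The first summand has an obvious unbiased estimator, so
everything rests on estimating `(a - λ)₊` from one Poisson count of unknown mean `λ ≤ n`. With
`t = √λ` and `a = τ²`, the function `(τ² - t²)₊` is an even piecewise parabola whose cosine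
coefficients decay like `1 / k²`, and `cos (u √λ)`, being entire in `λ`, has an unbiased estimator.
A second-order recurrence for that estimator gives an energy bound: its increments at `x` are
`O(u e^(u²/4) / √x)`. Since the square root stabilises the variance of a Poisson count, the
variance of the truncated cosine series of maximal frequency `u` is of order `e^(u²/2)` up to a
square of a logarithm. Taking `u² ≈ ε log n` costs only a power `n ^ (ε / 2)` in variance,
whereas the truncation bias is `O(τ / √(log n))`; when `a` is below `1 / log n` the estimator `0`
has a smaller bias. The coordinates are independent, so that biases and variances add up.
-/

section

open MeasureTheory ProbabilityTheory
open scoped NNReal Real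

section SequenceLemmas

theorem abs_sub_le_of_forall_abs_succ_sub_le {f g : ℕ → ℝ}
    (h : ∀ n, |f (n + 1) - f n| ≤ g (n + 1) - g n) (m n : ℕ) : |f m - f n| ≤ |g m - g n| := by
  have hsub : Monotone (g - f) := monotone_nat_of_le_succ fun k ↦ by
    simp only [Pi.sub_apply]
    linarith [(abs_le.1 (h k)).2]
  have hadd : Monotone (g + f) := monotone_nat_of_le_succ fun k ↦ by
    simp only [Pi.add_apply]
    linarith [(abs_le.1 (h k)).1]
  wlog hmn : n ≤ m generalizing m n
  · rw [abs_sub_comm, abs_sub_comm (g m)]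
    exact this n m (le_of_not_ge hmn)
  have h₁ : g n - f n ≤ g m - f m := hsub hmn
  have h₂ : g n + f n ≤ g m + f m := hadd hmn
  exact (abs_le.2 ⟨by linarith, by linarith⟩).trans (le_abs_self _)

theorem abs_sum_range_sub_le_div_of_hasSum {f : ℕ → ℝ} {s C : ℝ} (hf : HasSum f s)
    (hC : ∀ k : ℕ, |f k| ≤ C / (k : ℝ) ^ 2) {K : ℕ} (hK : K ≠ 0) :
    |∑ k ∈ Finset.range (K + 1), f k - s| ≤ C / K := by
  have hC₀ : 0 ≤ C := by simpa using (abs_nonneg _).trans (hC 1)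
  have hpartial (M : ℕ) (hM : K ≤ M) :
      |∑ k ∈ Finset.range (K + 1), f k - ∑ k ∈ Finset.range (M + 1), f k| ≤ C / K := by
    rw [abs_sub_comm, ← Finset.sum_Ico_eq_sub _ (by gcongr),
      Finset.Ico_add_one_add_one_eq_Ioc]
    calc |∑ k ∈ Finset.Ioc K M, f k| ≤ ∑ k ∈ Finset.Ioc K M, |f k| :=
          Finset.abs_sum_le_sum_abs _ _
      _ ≤ ∑ k ∈ Finset.Ioc K M, C * ((k : ℝ) ^ 2)⁻¹ := Finset.sum_le_sum fun k _ ↦ hC k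
      _ = C * ∑ k ∈ Finset.Ioc K M, ((k : ℝ) ^ 2)⁻¹ := by rw [Finset.mul_sum]
      _ ≤ C * ((K : ℝ)⁻¹ - (M : ℝ)⁻¹) := by gcongr; exact sum_Ioc_inv_sq_le_sub hK hM
      _ ≤ C / K := by
          rw [div_eq_mul_inv]
          gcongr
          exact sub_le_self _ (by positivity)
  have hlim := (tendsto_const_nhds (x := ∑ k ∈ Finset.range (K + 1), f k)).sub
    ((Filter.tendsto_add_atTop_iff_nat 1).2 hf.tendsto_sum_nat)
  exact le_of_tendsto hlim.abs (Filter.eventually_atTop.2 ⟨K, hpartial⟩)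

end SequenceLemmas

section FactorialSeries

/-- The factorial (Newton) series `∑ⱼ aⱼ x(x-1)⋯(x-j+1)` with coefficients `a` at `x`. If `x` is a
Poisson count of mean `r`, this is the unbiased estimator of the power series `∑ⱼ aⱼ rʲ`. The sum
stops at `j = x`, where the falling factorials of `x` start to vanish. -/
noncomputable def factorialSeries (a : ℕ → ℝ) (x : ℕ) : ℝ :=
  ∑ j ∈ Finset.range (x + 1), x.descFactorial j * a j

theorem factorialSeries_eq_sum_range (a : ℕ → ℝ) {x N : ℕ} (h : x < N) :
    factorialSeries a x = ∑ j ∈ Finset.range N, x.descFactorial j * a j := by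
  refine Finset.sum_subset (Finset.range_subset_range.2 h) fun j _ hj ↦ ?_
  have hxj : x < j := by simpa only [Finset.mem_range, not_lt, Nat.succ_le_iff] using hj
  rw [Nat.descFactorial_of_lt hxj, Nat.cast_zero, zero_mul]

theorem cast_descFactorial_succ (x j : ℕ) :
    (x.descFactorial (j + 1) : ℝ) = (x - j) * x.descFactorial j := by
  rcases le_or_gt j x with h | h
  · rw [Nat.descFactorial_succ, Nat.cast_mul, Nat.cast_sub h]
  · simp [Nat.descFactorial_of_lt h]

theorem factorialSeries_eq_zero_coeff_add (a : ℕ → ℝ) (x : ℕ) :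
    factorialSeries a x = a 0 + factorialSeries (fun j ↦ (x - j) * a (j + 1)) x := by
  rw [factorialSeries_eq_sum_range a (x.lt_succ_self.trans (x + 1).lt_succ_self),
    Finset.sum_range_succ', add_comm, factorialSeries]
  congr 1
  · simp
  · exact Finset.sum_congr rfl fun j _ ↦ by rw [cast_descFactorial_succ]; ring

theorem factorialSeries_add (a b : ℕ → ℝ) (x : ℕ) :
    factorialSeries (a + b) x = factorialSeries a x + factorialSeries b x := by
  simp only [factorialSeries, Pi.add_apply, mul_add, Finset.sum_add_distrib]

theorem factorialSeries_const_mul (c : ℝ) (a : ℕ → ℝ) (x : ℕ) :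
    factorialSeries (fun j ↦ c * a j) x = c * factorialSeries a x := by
  simp only [factorialSeries, Finset.mul_sum, mul_left_comm]

theorem factorialSeries_succ_sub (a : ℕ → ℝ) (x : ℕ) :
    factorialSeries a (x + 1) - factorialSeries a x =
      factorialSeries (fun j ↦ (j + 1) * a (j + 1)) x := by
  rw [factorialSeries_eq_zero_coeff_add a x, factorialSeries, Finset.sum_range_succ',
    Nat.descFactorial_zero, Nat.cast_one, one_mul, add_comm (a 0), add_sub_add_right_eq_sub,
    factorialSeries, factorialSeries, ← Finset.sum_sub_distrib]
  exact Finset.sum_congr rfl fun j _ ↦ by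
    rw [Nat.succ_descFactorial_succ]
    push_cast
    ring

theorem hasDerivAt_factorialSeries {a : ℝ → ℕ → ℝ} {a' : ℕ → ℝ} {u : ℝ}
    (h : ∀ j, HasDerivAt (fun v ↦ a v j) (a' j) u) (x : ℕ) :
    HasDerivAt (fun v ↦ factorialSeries (a v) x) (factorialSeries a' x) u :=
  HasDerivAt.fun_sum fun j _ ↦ (h j).const_mul _

theorem poisson_weight_mul_factorialSeries (r : ℝ) (a : ℕ → ℝ) (x : ℕ) :
    r ^ x / x.factorial * factorialSeries a x =
      ∑ j ∈ Finset.range (x + 1), a j * r ^ j * (r ^ (x - j) / (x - j).factorial) := by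
  rw [factorialSeries, Finset.mul_sum]
  refine Finset.sum_congr rfl fun j hj ↦ ?_
  have hjx : j ≤ x := Finset.mem_range_succ_iff.1 hj
  have hdesc : (x.descFactorial j : ℝ) ≠ 0 := by
    exact_mod_cast (Nat.descFactorial_pos.2 hjx).ne'
  rw [← Nat.factorial_mul_descFactorial hjx, ← pow_mul_pow_sub r hjx]
  push_cast
  field_simp

theorem hasSum_poisson_factorialSeries {r : ℝ} {a : ℕ → ℝ} (ha : Summable fun j ↦ a j * r ^ j) :
    HasSum (fun x : ℕ ↦ Real.exp (-r) * r ^ x / x.factorial * factorialSeries a x)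
      (∑' j, a j * r ^ j) := by
  have hexp : Summable fun k : ℕ ↦ ‖r ^ k / k.factorial‖ :=
    (Real.summable_pow_div_factorial r).norm
  have hexp_sum : ∑' k : ℕ, r ^ k / k.factorial = Real.exp r := by
    rw [Real.exp_eq_exp_ℝ, NormedSpace.exp_eq_tsum_div]
  have hcauchy := (summable_norm_sum_mul_range_of_summable_norm ha.norm hexp).of_norm.hasSum
  rw [← tsum_mul_tsum_eq_tsum_sum_range_of_summable_norm ha.norm hexp, hexp_sum] at hcauchy
  have h := hcauchy.mul_left (Real.exp (-r))
  simp only [← poisson_weight_mul_factorialSeries] at h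
  rw [mul_left_comm, ← Real.exp_add, neg_add_cancel, Real.exp_zero, mul_one] at h
  simpa only [mul_div_assoc, mul_assoc] using h

theorem integrable_factorialSeries {r : ℝ≥0} {a : ℕ → ℝ}
    (ha : Summable fun j ↦ a j * (r : ℝ) ^ j) : Integrable (factorialSeries a) Po(r) := by
  rw [integrable_poissonMeasure_iff]
  refine (hasSum_poisson_factorialSeries ha).summable.norm.congr fun x ↦ ?_
  rw [norm_mul, Real.norm_of_nonneg (by positivity)]

theorem integral_factorialSeries {r : ℝ≥0} {a : ℕ → ℝ}
    (ha : Summable fun j ↦ a j * (r : ℝ) ^ j) :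
    ∫ x, factorialSeries a x ∂Po(r) = ∑' j, a j * (r : ℝ) ^ j := by
  rw [integral_poissonMeasure]
  exact (hasSum_poisson_factorialSeries ha).tsum_eq

end FactorialSeries

section PoissonMoments

theorem factorialSeries_single (k x : ℕ) :
    factorialSeries (Pi.single k 1) x = x.descFactorial k := by
  rw [factorialSeries_eq_sum_range _ (Nat.lt_add_of_pos_right (n := x) k.succ_pos)]
  simp only [Pi.single_apply, mul_ite, mul_one, mul_zero, Finset.sum_ite_eq', Finset.mem_range]
  exact if_pos (by lia)

theorem hasSum_single_mul_pow (r : ℝ) (k : ℕ) :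
    HasSum (fun j ↦ (Pi.single k 1 : ℕ → ℝ) j * r ^ j) (r ^ k) := by
  simpa using hasSum_single (f := fun j ↦ (Pi.single k 1 : ℕ → ℝ) j * r ^ j) k
    fun j hj ↦ by simp [hj]

variable (r : ℝ≥0)

theorem integrable_descFactorial_poissonMeasure (k : ℕ) :
    Integrable (fun x : ℕ ↦ (x.descFactorial k : ℝ)) Po(r) :=
  (integrable_factorialSeries (hasSum_single_mul_pow r k).summable).congr
    (.of_forall (factorialSeries_single k))

theorem integral_descFactorial_poissonMeasure (k : ℕ) :
    ∫ x, (x.descFactorial k : ℝ) ∂Po(r) = (r : ℝ) ^ k := by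
  simp only [← factorialSeries_single]
  rw [integral_factorialSeries (hasSum_single_mul_pow r k).summable,
    (hasSum_single_mul_pow (r : ℝ) k).tsum_eq]

theorem cast_sq_eq_descFactorial_two_add_one (x : ℕ) :
    (x : ℝ) ^ 2 = x.descFactorial 2 + x.descFactorial 1 := by
  rw [Nat.cast_descFactorial_two, Nat.descFactorial_one]
  ring

theorem memLp_natCast_poissonMeasure : MemLp (fun x : ℕ ↦ (x : ℝ)) 2 Po(r) := by
  rw [memLp_two_iff_integrable_sq .of_discrete]
  simp only [cast_sq_eq_descFactorial_two_add_one]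
  exact (integrable_descFactorial_poissonMeasure r 2).add
    (integrable_descFactorial_poissonMeasure r 1)

theorem integral_natCast_poissonMeasure : ∫ x : ℕ, (x : ℝ) ∂Po(r) = r := by
  simpa using integral_descFactorial_poissonMeasure r 1

theorem variance_natCast_poissonMeasure : Var[fun x : ℕ ↦ (x : ℝ); Po(r)] = r := by
  rw [variance_eq_sub (memLp_natCast_poissonMeasure r), integral_natCast_poissonMeasure]
  simp only [Pi.pow_apply, cast_sq_eq_descFactorial_two_add_one]
  rw [integral_add (integrable_descFactorial_poissonMeasure r 2)
    (integrable_descFactorial_poissonMeasure r 1)]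
  simp only [integral_descFactorial_poissonMeasure]
  ring

end PoissonMoments

section Variance

theorem integral_sub_const_sq {Ω : Type*} [MeasurableSpace Ω] {μ : Measure Ω}
    [IsProbabilityMeasure μ] {X : Ω → ℝ} (hX : MemLp X 2 μ) (c : ℝ) :
    ∫ ω, (X ω - c) ^ 2 ∂μ = (∫ ω, X ω ∂μ - c) ^ 2 + Var[X; μ] := by
  have h := variance_eq_sub (hX.sub (memLp_const c))
  simp only [Pi.pow_apply, Pi.sub_apply] at h
  rw [integral_sub (hX.integrable one_le_two) (integrable_const c), integral_const,
    probReal_univ, one_smul] at h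
  have hvar : Var[X - fun _ ↦ c; μ] = Var[X; μ] := variance_sub_const hX.1 c
  linarith

theorem one_div_sqrt_add_half_le (x : ℝ) (hx : 0 ≤ x) :
    1 / √(x + 1 / 2) ≤ 2 * (√(x + 1) - √x) := by
  have hconj : (√(x + 1) - √x) * (√(x + 1) + √x) = 1 := by
    rw [mul_comm, ← sq_sub_sq, Real.sq_sqrt (by positivity), Real.sq_sqrt hx]
    ring
  have hconcave : √(x + 1) + √x ≤ 2 * √(x + 1 / 2) := by
    refine abs_le_of_sq_le_sq' ?_ (by positivity) |>.2
    rw [mul_pow, Real.sq_sqrt (by positivity)]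
    nlinarith [sq_nonneg (√(x + 1) - √x), Real.sq_sqrt hx,
      Real.sq_sqrt (by positivity : 0 ≤ x + 1)]
  have hdiff : 0 ≤ √(x + 1) - √x := sub_nonneg.2 (Real.sqrt_le_sqrt (by linarith))
  rw [div_le_iff₀ (by positivity)]
  nlinarith [mul_le_mul_of_nonneg_left hconcave hdiff]

theorem sq_sqrt_sub_sqrt_le {x y : ℝ} (hx : 0 ≤ x) (hy : 0 < y) :
    (√x - √y) ^ 2 ≤ (x - y) ^ 2 / y := by
  have hfactor : x - y = (√x - √y) * (√x + √y) := by
    rw [mul_comm, ← sq_sub_sq, Real.sq_sqrt hx, Real.sq_sqrt hy.le]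
  rw [le_div_iff₀ hy, hfactor, mul_pow]
  gcongr
  calc y = √y ^ 2 := (Real.sq_sqrt hy.le).symm
    _ ≤ (√x + √y) ^ 2 := by gcongr; exact le_add_of_nonneg_left (Real.sqrt_nonneg x)

variable {f : ℕ → ℝ} {A : ℝ}

theorem sq_sub_le_of_abs_succ_sub_le (hf : ∀ x : ℕ, |f (x + 1) - f x| ≤ A / √(x + 1 / 2))
    (x : ℕ) {m : ℕ} (hm : m ≠ 0) : (f x - f m) ^ 2 ≤ 4 * A ^ 2 / m * (x - m : ℝ) ^ 2 := by
  have hA : 0 ≤ A := by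
    by_contra! hneg
    exact ((abs_nonneg _).trans (hf 0)).not_gt (div_neg_of_neg_of_pos hneg (by positivity))
  have hstep (k : ℕ) : |f (k + 1) - f k| ≤ 2 * A * √(k + 1 : ℕ) - 2 * A * √k := by
    calc |f (k + 1) - f k| ≤ A * (1 / √(k + 1 / 2)) := by rw [mul_one_div]; exact hf k
      _ ≤ A * (2 * (√(k + 1) - √k)) := by gcongr; exact one_div_sqrt_add_half_le k k.cast_nonneg
      _ = 2 * A * √(k + 1 : ℕ) - 2 * A * √k := by push_cast; ring
  have hm₀ : (0 : ℝ) < m := by exact_mod_cast hm.bot_lt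
  calc (f x - f m) ^ 2 ≤ (2 * A * √x - 2 * A * √m) ^ 2 :=
        sq_le_sq.2 (abs_sub_le_of_forall_abs_succ_sub_le (g := fun k ↦ 2 * A * √k) hstep x m)
    _ = 4 * A ^ 2 * (√x - √m) ^ 2 := by ring
    _ ≤ 4 * A ^ 2 * ((x - m : ℝ) ^ 2 / m) := by
        gcongr; exact sq_sqrt_sub_sqrt_le x.cast_nonneg hm₀
    _ = 4 * A ^ 2 / m * (x - m : ℝ) ^ 2 := by ring

/- The square root stabilises the variance of a Poisson variable, and `hf` says that `f` is
Lipschitz as a function of `√x`. -/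
theorem variance_poissonMeasure_le_of_abs_succ_sub_le
    (hf : ∀ x : ℕ, |f (x + 1) - f x| ≤ A / √(x + 1 / 2)) (r : ℝ≥0) :
    Var[f; Po(r)] ≤ 8 * A ^ 2 := by
  set m : ℕ := ⌊(r : ℝ)⌋₊ + 1 with hm
  have hrm : (r : ℝ) ≤ m := by rw [hm, Nat.cast_succ]; exact (Nat.lt_floor_add_one _).le
  have hmr : (m : ℝ) ≤ r + 1 := by
    rw [hm, Nat.cast_succ]; gcongr; exact Nat.floor_le r.coe_nonneg
  have hm₁ : (1 : ℝ) ≤ m := by exact_mod_cast Nat.succ_le_of_lt (hm ▸ Nat.succ_pos _ : 0 < m)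
  have hX := memLp_natCast_poissonMeasure r
  calc Var[f; Po(r)] = Var[fun x ↦ f x - f m; Po(r)] := (variance_sub_const .of_discrete _).symm
    _ ≤ ∫ x, (f x - f m) ^ 2 ∂Po(r) := variance_le_expectation_sq .of_discrete
    _ ≤ ∫ x : ℕ, 4 * A ^ 2 / m * (x - m : ℝ) ^ 2 ∂Po(r) :=
        integral_mono_of_nonneg (.of_forall fun x ↦ sq_nonneg _)
          ((hX.sub (memLp_const (m : ℝ))).integrable_sq.const_mul _)
          (.of_forall fun x ↦ sq_sub_le_of_abs_succ_sub_le hf x (Nat.succ_ne_zero _))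
    _ = 4 * A ^ 2 / m * ((r - m : ℝ) ^ 2 + r) := by
        rw [integral_const_mul, integral_sub_const_sq hX, integral_natCast_poissonMeasure,
          variance_natCast_poissonMeasure]
    _ ≤ 4 * A ^ 2 / m * (2 * m) := by gcongr; nlinarith
    _ = 8 * A ^ 2 := by field_simp; ring

end Variance

section PoissonTrig

open Nat (factorial)

/-- Taylor coefficients in `r` of `cos (u √r)`. -/
noncomputable def cosCoeff (u : ℝ) (j : ℕ) : ℝ :=
  (-1) ^ j * u ^ (2 * j) / (2 * j).factorial

/-- Taylor coefficients in `r` of `sin (u √r) / √r`. -/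
noncomputable def sinCoeff (u : ℝ) (j : ℕ) : ℝ :=
  (-1) ^ j * u ^ (2 * j + 1) / (2 * j + 1).factorial

/-- The unbiased estimator of `cos (u √r)` from a Poisson count of mean `r`. -/
noncomputable def poissonCos (u : ℝ) : ℕ → ℝ :=
  factorialSeries (cosCoeff u)

/-- The unbiased estimator of `sin (u √r) / √r` from a Poisson count of mean `r`. It plays for
`poissonCos` the role that `sin` plays for `cos`. -/
noncomputable def poissonSin (u : ℝ) : ℕ → ℝ :=
  factorialSeries (sinCoeff u)

theorem hasSum_cosCoeff (u : ℝ) {r : ℝ} (hr : 0 ≤ r) :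
    HasSum (fun j ↦ cosCoeff u j * r ^ j) (Real.cos (u * √r)) := by
  convert Real.hasSum_cos (u * √r) using 2 with j
  rw [cosCoeff, mul_pow, pow_mul √r, Real.sq_sqrt hr]
  ring

variable (u : ℝ)

theorem integral_poissonCos (r : ℝ≥0) : ∫ x, poissonCos u x ∂Po(r) = Real.cos (u * √r) := by
  rw [poissonCos, integral_factorialSeries (hasSum_cosCoeff u r.coe_nonneg).summable,
    (hasSum_cosCoeff u r.coe_nonneg).tsum_eq]

theorem succ_mul_cosCoeff_succ (j : ℕ) :
    (j + 1) * cosCoeff u (j + 1) = -(u / 2) * sinCoeff u j := by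
  rw [cosCoeff, sinCoeff, show 2 * (j + 1) = 2 * j + 1 + 1 by ring, Nat.factorial_succ (2 * j + 1)]
  push_cast
  field_simp
  ring

theorem two_mul_add_one_mul_sinCoeff (j : ℕ) : (2 * j + 1) * sinCoeff u j = u * cosCoeff u j := by
  rw [cosCoeff, sinCoeff, Nat.factorial_succ]
  push_cast
  field_simp
  ring

theorem hasDerivAt_cosCoeff_succ (j : ℕ) :
    HasDerivAt (fun v ↦ cosCoeff v (j + 1)) (-sinCoeff u j) u := by
  refine (((hasDerivAt_pow (2 * j + 1 + 1) u).const_mul ((-1) ^ (j + 1))).div_const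
    ((2 * j + 1 + 1).factorial : ℝ)).congr_deriv ?_
  rw [sinCoeff, Nat.factorial_succ (2 * j + 1), Nat.add_sub_cancel]
  push_cast
  field_simp
  ring

theorem hasDerivAt_sinCoeff (j : ℕ) : HasDerivAt (fun v ↦ sinCoeff v j) (cosCoeff u j) u := by
  refine (((hasDerivAt_pow (2 * j + 1) u).const_mul ((-1) ^ j)).div_const
    ((2 * j + 1).factorial : ℝ)).congr_deriv ?_
  rw [cosCoeff, Nat.factorial_succ, Nat.add_sub_cancel]
  push_cast
  field_simp

theorem poissonCos_succ_sub (x : ℕ) :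
    poissonCos u (x + 1) - poissonCos u x = -(u / 2) * poissonSin u x := by
  rw [poissonCos, factorialSeries_succ_sub, poissonSin, ← factorialSeries_const_mul]
  simp only [succ_mul_cosCoeff_succ]

theorem hasDerivAt_poissonSin (x : ℕ) :
    HasDerivAt (fun v ↦ poissonSin v x) (poissonCos u x) u :=
  hasDerivAt_factorialSeries (hasDerivAt_sinCoeff u) x

theorem hasDerivAt_poissonCos (x : ℕ) :
    HasDerivAt (fun v ↦ poissonCos v x)
      (-(x + 1 / 2) * poissonSin u x + u / 2 * poissonCos u x) u := by
  have hseries : (fun v ↦ poissonCos v x) =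
      fun v ↦ 1 + factorialSeries (fun j ↦ (x - j) * cosCoeff v (j + 1)) x := by
    ext v
    rw [poissonCos, factorialSeries_eq_zero_coeff_add]
    simp [cosCoeff]
  rw [hseries]
  refine ((hasDerivAt_factorialSeries
    (fun j ↦ (hasDerivAt_cosCoeff_succ u j).const_mul (x - j : ℝ)) x).const_add 1).congr_deriv ?_
  rw [poissonCos, poissonSin, ← factorialSeries_const_mul, ← factorialSeries_const_mul,
    ← factorialSeries_add]
  congr 1 with j
  simp only [Pi.add_apply]
  linear_combination (1 / 2) * two_mul_add_one_mul_sinCoeff u j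

theorem poissonCos_neg : poissonCos (-u) = poissonCos u := by
  have hcoeff : cosCoeff (-u) = cosCoeff u := by ext j; simp [cosCoeff]
  rw [poissonCos, hcoeff, poissonCos]

theorem poissonSin_neg (x : ℕ) : poissonSin (-u) x = -poissonSin u x := by
  have hcoeff : sinCoeff (-u) = fun j ↦ -1 * sinCoeff u j := by
    ext j
    simp [sinCoeff, (odd_two_mul_add_one j).neg_pow, neg_div]
  rw [poissonSin, hcoeff, factorialSeries_const_mul, poissonSin, neg_one_mul]

theorem poissonCos_zero (x : ℕ) : poissonCos 0 x = 1 := by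
  simp [poissonCos, factorialSeries, cosCoeff, Finset.sum_range_succ']

theorem poissonSin_zero (x : ℕ) : poissonSin 0 x = 0 := by
  simp [poissonSin, factorialSeries, sinCoeff]

theorem hasDerivAt_poissonTrig_energy (x : ℕ) :
    HasDerivAt (fun v ↦ (poissonCos v x ^ 2 + (x + 1 / 2) * poissonSin v x ^ 2) *
        Real.exp (-(v ^ 2 / 2)))
      (-u * (x + 1 / 2) * poissonSin u x ^ 2 * Real.exp (-(u ^ 2 / 2))) u := by
  have hexp : HasDerivAt (fun v : ℝ ↦ Real.exp (-(v ^ 2 / 2)))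
      (Real.exp (-(u ^ 2 / 2)) * -u) u := by
    refine ((hasDerivAt_pow 2 u).div_const 2).fun_neg.exp.congr_deriv ?_
    ring
  refine ((((hasDerivAt_poissonCos u x).fun_pow 2).fun_add
    (((hasDerivAt_poissonSin u x).fun_pow 2).const_mul (x + 1 / 2 : ℝ))).fun_mul
    hexp).congr_deriv ?_
  ring

theorem poissonTrig_energy_le (x : ℕ) :
    poissonCos u x ^ 2 + (x + 1 / 2) * poissonSin u x ^ 2 ≤ Real.exp (u ^ 2 / 2) := by
  wlog hu : 0 ≤ u generalizing u
  · simpa only [poissonCos_neg, poissonSin_neg, neg_sq] using this (-u) (by linarith)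
  have hanti : AntitoneOn (fun v ↦ (poissonCos v x ^ 2 + (x + 1 / 2) * poissonSin v x ^ 2) *
      Real.exp (-(v ^ 2 / 2))) (Set.Ici 0) := by
    refine antitoneOn_of_deriv_nonpos (convex_Ici 0)
      (fun v _ ↦ (hasDerivAt_poissonTrig_energy v x).continuousAt.continuousWithinAt)
      (fun v _ ↦ (hasDerivAt_poissonTrig_energy v x).differentiableAt.differentiableWithinAt)
      fun v hv ↦ ?_
    rw [interior_Ici, Set.mem_Ioi] at hv
    rw [(hasDerivAt_poissonTrig_energy v x).deriv, neg_mul, neg_mul, neg_mul, neg_nonpos]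
    positivity
  have h := hanti Set.self_mem_Ici hu hu
  simp only [poissonCos_zero, poissonSin_zero, Real.exp_neg, ← div_eq_mul_inv] at h
  simpa [div_le_iff₀ (Real.exp_pos _)] using h

theorem exp_sq_div_four_sq : Real.exp (u ^ 2 / 4) ^ 2 = Real.exp (u ^ 2 / 2) := by
  rw [← Real.exp_nat_mul]
  congr 1
  push_cast
  ring

theorem abs_poissonSin_le (x : ℕ) :
    |poissonSin u x| ≤ Real.exp (u ^ 2 / 4) / √(x + 1 / 2) := by
  refine abs_le_of_sq_le_sq ?_ (by positivity)
  rw [div_pow, Real.sq_sqrt (by positivity), exp_sq_div_four_sq, le_div_iff₀' (by positivity)]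
  exact (le_add_of_nonneg_left (sq_nonneg _)).trans (poissonTrig_energy_le u x)

theorem abs_poissonCos_le (x : ℕ) : |poissonCos u x| ≤ Real.exp (u ^ 2 / 4) := by
  refine abs_le_of_sq_le_sq ?_ (by positivity)
  rw [exp_sq_div_four_sq]
  exact (le_add_of_nonneg_right (by positivity)).trans (poissonTrig_energy_le u x)

theorem abs_poissonCos_succ_sub_le (x : ℕ) :
    |poissonCos u (x + 1) - poissonCos u x| ≤ |u| / 2 * Real.exp (u ^ 2 / 4) / √(x + 1 / 2) := by
  rw [poissonCos_succ_sub, abs_mul, abs_neg, abs_div, abs_two, mul_div_assoc]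
  gcongr
  exact abs_poissonSin_le u x

theorem memLp_poissonCos (r : ℝ≥0) : MemLp (poissonCos u) 2 Po(r) :=
  .of_bound .of_discrete _ (.of_forall (abs_poissonCos_le u))

end PoissonTrig

section CosineSeries

theorem bernoulliFun_three (x : ℝ) : bernoulliFun 3 x = x ^ 3 - 3 / 2 * x ^ 2 + x / 2 := by
  have hthree : bernoulli 3 = 0 := bernoulli_eq_zero_of_odd (by decide) (by decide)
  simp only [bernoulliFun, Polynomial.bernoulli_def, Finset.sum_range_succ, Finset.range_one,
    Finset.sum_singleton, Nat.reduceAdd, Nat.reduceSub, Nat.add_one_sub_one, tsub_zero, tsub_self,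
    bernoulli_zero, bernoulli_one, bernoulli_two, hthree, Nat.choose, Polynomial.map_add,
    Polynomial.map_monomial, Polynomial.eval_add, Polynomial.eval_monomial, eq_ratCast]
  push_cast
  ring

theorem hasSum_cos_div_sq {x : ℝ} (hx : |x| ≤ 1) :
    HasSum (fun k : ℕ ↦ Real.cos (2 * π * k * x) / (k : ℝ) ^ 2)
      (π ^ 2 * (x ^ 2 - |x| + 1 / 6)) := by
  have h := hasSum_one_div_nat_pow_mul_cos one_ne_zero ⟨abs_nonneg x, hx⟩
  rw [← bernoulliFun, mul_one, bernoulliFun_two] at h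
  convert! h using 1
  · ext k
    rw [one_div_mul_eq_div, ← Real.cos_abs, abs_mul, abs_of_nonneg (by positivity : 0 ≤ 2 * π * k)]
  · rw [Nat.factorial_two, sq_abs]
    push_cast
    ring

theorem hasSum_sin_div_cube {x : ℝ} (hx : |x| ≤ 1) :
    HasSum (fun k : ℕ ↦ Real.sin (2 * π * k * x) / (k : ℝ) ^ 3)
      (2 * π ^ 3 / 3 * (x ^ 3 - 3 / 2 * (x * |x|) + x / 2)) := by
  wlog hx₀ : 0 ≤ x generalizing x
  · have h := (this ((abs_neg x).trans_le hx) (by linarith)).neg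
    convert! h using 1
    · ext k
      rw [mul_neg, Real.sin_neg, neg_div, neg_neg]
    · rw [abs_neg]
      ring
  rw [abs_of_nonneg hx₀] at hx ⊢
  have h := hasSum_one_div_nat_pow_mul_sin one_ne_zero ⟨hx₀, hx⟩
  rw [← bernoulliFun, mul_one, bernoulliFun_three] at h
  convert! h using 1
  · simp only [one_div_mul_eq_div]
  · simp only [Nat.factorial]
    push_cast
    ring

/-- The frequency of the `k`-th term of a cosine series on `[0, L]`. -/
noncomputable def cosineFreq (L : ℝ) (k : ℕ) : ℝ :=
  π * k / L

theorem cosineFreq_nonneg {L : ℝ} (hL : 0 ≤ L) (k : ℕ) : 0 ≤ cosineFreq L k := by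
  rw [cosineFreq]
  positivity

/-- The `k`-th coefficient, for `k ≠ 0`, of the cosine series on `[0, L]` of the truncated parabola
`t ↦ max (τ ^ 2 - t ^ 2) 0`. At `k = 0` it is `0` because `1 / 0 = 0`, and not the mean
`2 * τ ^ 3 / (3 * L)` of the parabola. -/
noncomputable def parabolaCoeff (L τ : ℝ) (k : ℕ) : ℝ :=
  4 / L * ((Real.sin (cosineFreq L k * τ) - cosineFreq L k * τ * Real.cos (cosineFreq L k * τ)) /
    cosineFreq L k ^ 3)

variable {L τ : ℝ}

theorem parabolaCoeff_mul_cos (hL : L ≠ 0) (t : ℝ) (k : ℕ) :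
    parabolaCoeff L τ k * Real.cos (cosineFreq L k * t) =
      2 * L ^ 2 / π ^ 3 * (Real.sin (2 * π * k * ((τ + t) / (2 * L))) / (k : ℝ) ^ 3 +
        Real.sin (2 * π * k * ((τ - t) / (2 * L))) / (k : ℝ) ^ 3) -
      2 * τ * L / π ^ 2 * (Real.cos (2 * π * k * ((τ + t) / (2 * L))) / (k : ℝ) ^ 2 +
        Real.cos (2 * π * k * ((τ - t) / (2 * L))) / (k : ℝ) ^ 2) := by
  rcases eq_or_ne k 0 with rfl | hk
  · simp [parabolaCoeff, cosineFreq]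
  have hphase (s : ℝ) : 2 * π * k * (s / (2 * L)) = cosineFreq L k * s := by
    rw [cosineFreq]
    field_simp
  simp only [hphase, mul_add, mul_sub, Real.sin_add, Real.sin_sub, Real.cos_add, Real.cos_sub,
    parabolaCoeff]
  generalize Real.sin (cosineFreq L k * τ) = s₁
  generalize Real.sin (cosineFreq L k * t) = s₂
  generalize Real.cos (cosineFreq L k * τ) = c₁
  generalize Real.cos (cosineFreq L k * t) = c₂
  rw [cosineFreq]
  field_simp
  ring

theorem hasSum_parabolaCoeff_mul_cos (hL : 0 < L) (hτ : 0 ≤ τ) {t : ℝ} (ht : 0 ≤ t)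
    (h : τ + t ≤ 2 * L) :
    HasSum (fun k ↦ parabolaCoeff L τ k * Real.cos (cosineFreq L k * t))
      (max (τ ^ 2 - t ^ 2) 0 - 2 * τ ^ 3 / (3 * L)) := by
  have hsum : |(τ + t) / (2 * L)| ≤ 1 := by
    rw [abs_of_nonneg (by positivity), div_le_one (by positivity)]
    exact h
  have hdiff : |(τ - t) / (2 * L)| ≤ 1 := by
    rw [abs_div, abs_of_pos (by positivity : 0 < 2 * L), div_le_one (by positivity)]
    exact abs_le.2 ⟨by linarith, by linarith⟩
  convert! (((hasSum_sin_div_cube hsum).add (hasSum_sin_div_cube hdiff)).mul_left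
    (2 * L ^ 2 / π ^ 3)).sub (((hasSum_cos_div_sq hsum).add (hasSum_cos_div_sq hdiff)).mul_left
      (2 * τ * L / π ^ 2)) using 1
  · exact funext (parabolaCoeff_mul_cos hL.ne' t)
  · rw [abs_of_nonneg (by positivity : 0 ≤ (τ + t) / (2 * L)), abs_div,
      abs_of_pos (by positivity : 0 < 2 * L)]
    rcases le_total t τ with htτ | htτ
    · rw [max_eq_left (by nlinarith), abs_of_nonneg (sub_nonneg.2 htτ)]
      field_simp
      ring
    · rw [max_eq_right (by nlinarith), abs_of_nonpos (sub_nonpos.2 htτ)]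
      field_simp
      ring

theorem abs_parabolaCoeff_le (hL : 0 < L) (hτ : 0 ≤ τ) (k : ℕ) :
    |parabolaCoeff L τ k| ≤ 8 * τ * L / π ^ 2 / (k : ℝ) ^ 2 := by
  rcases eq_or_ne k 0 with rfl | hk
  · simp [parabolaCoeff, cosineFreq]
  have hω : 0 < cosineFreq L k := by rw [cosineFreq]; positivity
  have hωτ : 0 ≤ cosineFreq L k * τ := by positivity
  have hnum : |Real.sin (cosineFreq L k * τ) -
      cosineFreq L k * τ * Real.cos (cosineFreq L k * τ)| ≤ 2 * (cosineFreq L k * τ) := by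
    refine (abs_sub _ _).trans ?_
    rw [abs_mul, abs_of_nonneg hωτ]
    nlinarith [Real.abs_sin_le_abs (x := cosineFreq L k * τ), abs_of_nonneg hωτ,
      Real.abs_cos_le_one (cosineFreq L k * τ)]
  rw [parabolaCoeff, abs_mul, abs_div, abs_div, abs_of_pos hL, abs_of_pos (pow_pos hω 3),
    abs_of_pos four_pos]
  calc _ ≤ 4 / L * (2 * (cosineFreq L k * τ) / cosineFreq L k ^ 3) := by gcongr
    _ = 8 * τ * L / π ^ 2 / (k : ℝ) ^ 2 := by
        rw [cosineFreq]
        field_simp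
        ring

theorem abs_sum_parabolaCoeff_mul_cos_sub_le (hL : 0 < L) (hτ : 0 ≤ τ) {t : ℝ} (ht : 0 ≤ t)
    (h : τ + t ≤ 2 * L) {K : ℕ} (hK : K ≠ 0) :
    |∑ k ∈ Finset.range (K + 1), parabolaCoeff L τ k * Real.cos (cosineFreq L k * t) -
      (max (τ ^ 2 - t ^ 2) 0 - 2 * τ ^ 3 / (3 * L))| ≤ 8 * τ * L / π ^ 2 / K := by
  refine abs_sum_range_sub_le_div_of_hasSum (hasSum_parabolaCoeff_mul_cos hL hτ ht h)
    (fun k ↦ ?_) hK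
  rw [abs_mul]
  exact (mul_le_of_le_one_right (abs_nonneg _) (Real.abs_cos_le_one _)).trans
    (abs_parabolaCoeff_le hL hτ k)

end CosineSeries

section ParabolaEstimator

/-- An estimator of `max (τ ^ 2 - r) 0` from a Poisson count of mean `r`: the unbiased estimator of
the cosine series on `[0, L]` of the truncated parabola at `√r`, cut off at frequency index `K`. -/
noncomputable def parabolaEstimator (L τ : ℝ) (K x : ℕ) : ℝ :=
  2 * τ ^ 3 / (3 * L) +
    ∑ k ∈ Finset.range (K + 1), parabolaCoeff L τ k * poissonCos (cosineFreq L k) x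

variable {L τ : ℝ}

theorem memLp_parabolaEstimator (L τ : ℝ) (K : ℕ) (r : ℝ≥0) :
    MemLp (parabolaEstimator L τ K) 2 Po(r) := by
  have hsum : MemLp (fun x ↦ ∑ k ∈ Finset.range (K + 1),
      parabolaCoeff L τ k * poissonCos (cosineFreq L k) x) 2 Po(r) :=
    memLp_finsetSum _ fun k _ ↦ (memLp_poissonCos (cosineFreq L k) r).const_mul _
  have hconst : MemLp (fun _ : ℕ ↦ 2 * τ ^ 3 / (3 * L)) 2 Po(r) := memLp_const _
  exact hconst.add hsum

theorem integral_parabolaEstimator (L τ : ℝ) (K : ℕ) (r : ℝ≥0) :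
    ∫ x, parabolaEstimator L τ K x ∂Po(r) = 2 * τ ^ 3 / (3 * L) +
      ∑ k ∈ Finset.range (K + 1), parabolaCoeff L τ k * Real.cos (cosineFreq L k * √r) := by
  have hterm (k : ℕ) :
      Integrable (fun x ↦ parabolaCoeff L τ k * poissonCos (cosineFreq L k) x) Po(r) :=
    ((memLp_poissonCos _ r).const_mul _).integrable one_le_two
  simp only [parabolaEstimator]
  rw [integral_add (integrable_const _) (integrable_finsetSum _ fun k _ ↦ hterm k),
    integral_finsetSum _ fun k _ ↦ hterm k]
  simp only [integral_const_mul, integral_poissonCos, integral_const, probReal_univ, one_smul]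

theorem abs_integral_parabolaEstimator_sub_le (hL : 0 < L) (hτ : 0 ≤ τ) {r : ℝ≥0}
    (h : τ + √r ≤ 2 * L) {K : ℕ} (hK : K ≠ 0) :
    |∫ x, parabolaEstimator L τ K x ∂Po(r) - max (τ ^ 2 - r) 0| ≤ 8 * τ * L / π ^ 2 / K := by
  have hseries := abs_sum_parabolaCoeff_mul_cos_sub_le hL hτ (Real.sqrt_nonneg r) h hK
  rw [Real.sq_sqrt r.coe_nonneg] at hseries
  convert hseries using 2
  rw [integral_parabolaEstimator]
  ring

theorem abs_parabolaCoeff_mul_poissonCos_succ_sub_le (hL : 0 < L) (hτ : 0 ≤ τ) {k K : ℕ}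
    (hk : k ≤ K) (x : ℕ) :
    |parabolaCoeff L τ k * (poissonCos (cosineFreq L k) (x + 1) - poissonCos (cosineFreq L k) x)| ≤
      4 * τ / π * Real.exp (cosineFreq L K ^ 2 / 4) / √(x + 1 / 2) * (k : ℝ)⁻¹ := by
  have hω : 0 ≤ cosineFreq L k := cosineFreq_nonneg hL.le k
  have hωK : cosineFreq L k ≤ cosineFreq L K := by simp only [cosineFreq]; gcongr
  rw [abs_mul]
  calc _ ≤ 8 * τ * L / π ^ 2 / (k : ℝ) ^ 2 *
        (|cosineFreq L k| / 2 * Real.exp (cosineFreq L k ^ 2 / 4) / √(x + 1 / 2)) :=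
        mul_le_mul (abs_parabolaCoeff_le hL hτ k) (abs_poissonCos_succ_sub_le _ x) (abs_nonneg _)
          (by positivity)
    _ ≤ 8 * τ * L / π ^ 2 / (k : ℝ) ^ 2 *
        (cosineFreq L k / 2 * Real.exp (cosineFreq L K ^ 2 / 4) / √(x + 1 / 2)) := by
        rw [abs_of_nonneg hω]
        gcongr
    _ = 4 * τ / π * Real.exp (cosineFreq L K ^ 2 / 4) / √(x + 1 / 2) * (k : ℝ)⁻¹ := by
        rcases eq_or_ne k 0 with rfl | hk₀
        · simp
        · rw [cosineFreq]
          field_simp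
          ring

theorem sum_range_succ_inv_le_one_add_log (K : ℕ) :
    ∑ k ∈ Finset.range (K + 1), (k : ℝ)⁻¹ ≤ 1 + Real.log K := by
  simpa [harmonic, Finset.sum_range_succ'] using harmonic_le_one_add_log K

theorem abs_parabolaEstimator_succ_sub_le (hL : 0 < L) (hτ : 0 ≤ τ) (K x : ℕ) :
    |parabolaEstimator L τ K (x + 1) - parabolaEstimator L τ K x| ≤
      4 * τ / π * (1 + Real.log K) * Real.exp (cosineFreq L K ^ 2 / 4) / √(x + 1 / 2) := by
  rw [parabolaEstimator, parabolaEstimator, add_sub_add_left_eq_sub, ← Finset.sum_sub_distrib]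
  simp only [← mul_sub]
  calc _ ≤ ∑ k ∈ Finset.range (K + 1),
        4 * τ / π * Real.exp (cosineFreq L K ^ 2 / 4) / √(x + 1 / 2) * (k : ℝ)⁻¹ :=
        (Finset.abs_sum_le_sum_abs _ _).trans <| Finset.sum_le_sum fun k hk ↦
          abs_parabolaCoeff_mul_poissonCos_succ_sub_le hL hτ (Finset.mem_range_succ_iff.1 hk) x
    _ ≤ 4 * τ / π * Real.exp (cosineFreq L K ^ 2 / 4) / √(x + 1 / 2) * (1 + Real.log K) := by
        rw [← Finset.mul_sum]
        gcongr
        exact sum_range_succ_inv_le_one_add_log K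
    _ = _ := by ring

theorem variance_parabolaEstimator_le (hL : 0 < L) (hτ : 0 ≤ τ) (K : ℕ) (r : ℝ≥0) :
    Var[parabolaEstimator L τ K; Po(r)] ≤
      16 * τ ^ 2 * (1 + Real.log K) ^ 2 * Real.exp (cosineFreq L K ^ 2 / 2) := by
  refine (variance_poissonMeasure_le_of_abs_succ_sub_le
    (abs_parabolaEstimator_succ_sub_le hL hτ K) r).trans ?_
  have hπ : 8 * 4 ^ 2 / π ^ 2 ≤ 16 := by
    rw [div_le_iff₀ (by positivity)]
    nlinarith [Real.pi_gt_three]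
  calc 8 * (4 * τ / π * (1 + Real.log K) * Real.exp (cosineFreq L K ^ 2 / 4)) ^ 2
      = 8 * 4 ^ 2 / π ^ 2 * (τ ^ 2 * (1 + Real.log K) ^ 2 * Real.exp (cosineFreq L K ^ 2 / 2)) := by
        rw [mul_pow, exp_sq_div_four_sq]
        ring
    _ ≤ 16 * (τ ^ 2 * (1 + Real.log K) ^ 2 * Real.exp (cosineFreq L K ^ 2 / 2)) := by gcongr
    _ = _ := by ring

end ParabolaEstimator

section Tuning

/-- The cutoff index for a cosine series on `[0, √n]` whose largest frequency is about
`√(ε * log n / 2)`. -/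
noncomputable def bandwidth (ε : ℝ) (n : ℕ) : ℕ :=
  ⌈√(ε * Real.log n / 2) * √n / π⌉₊

variable {ε : ℝ} {n : ℕ}

theorem one_le_two_mul_log_of_two_le (hn : 2 ≤ n) : 1 ≤ 2 * Real.log n := by
  have h := Real.log_le_log two_pos (Nat.ofNat_le_cast.2 hn : (2 : ℝ) ≤ n)
  linarith [Real.log_two_gt_d9]

theorem bandwidth_ne_zero (hε : 0 < ε) (hn : 2 ≤ n) : bandwidth ε n ≠ 0 := by
  have hlog := one_le_two_mul_log_of_two_le hn
  have hw : 0 < √(ε * Real.log n / 2) := Real.sqrt_pos.2 (by nlinarith)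
  exact (Nat.ceil_pos.2 (by positivity)).ne'

theorem sqrt_le_cosineFreq_bandwidth (ε : ℝ) (hn : n ≠ 0) :
    √(ε * Real.log n / 2) ≤ cosineFreq (√n) (bandwidth ε n) := by
  have h : √(ε * Real.log n / 2) * √n / π ≤ bandwidth ε n := Nat.le_ceil _
  rw [div_le_iff₀' Real.pi_pos] at h
  rwa [cosineFreq, le_div_iff₀ (by positivity)]

theorem bandwidth_le (ε : ℝ) (n : ℕ) :
    (bandwidth ε n : ℝ) ≤ √(ε * Real.log n / 2) * √n / π + 1 :=
  (Nat.ceil_lt_add_one (by positivity)).le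

theorem cosineFreq_bandwidth_sq_le (hε : 0 ≤ ε) (hn : 2 ≤ n) :
    cosineFreq (√n) (bandwidth ε n) ^ 2 ≤ ε * Real.log n + π ^ 2 := by
  have hn' : (2 : ℝ) ≤ n := Nat.ofNat_le_cast.2 hn
  have : 0 ≤ Real.log n := Real.log_natCast_nonneg n
  have hfreq : cosineFreq (√n) (bandwidth ε n) ≤ √(ε * Real.log n / 2) + π / √n := by
    calc _ ≤ π * (√(ε * Real.log n / 2) * √n / π + 1) / √n := by
          rw [cosineFreq]
          gcongr
          exact bandwidth_le ε n
      _ = _ := by field_simp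
  calc _ ≤ (√(ε * Real.log n / 2) + π / √n) ^ 2 := by
        gcongr
        exact cosineFreq_nonneg (Real.sqrt_nonneg _) _
    _ ≤ 2 * (√(ε * Real.log n / 2) ^ 2 + (π / √n) ^ 2) := add_sq_le
    _ = ε * Real.log n + π ^ 2 * (2 / n) := by
        rw [Real.sq_sqrt (by positivity), div_pow, Real.sq_sqrt (by positivity)]
        ring
    _ ≤ ε * Real.log n + π ^ 2 * 1 := by
        gcongr
        exact (div_le_one (by positivity)).2 hn'
    _ = _ := by ring

theorem exp_cosineFreq_bandwidth_le (hε : 0 ≤ ε) (hn : 2 ≤ n) :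
    Real.exp (cosineFreq (√n) (bandwidth ε n) ^ 2 / 2) ≤
      Real.exp (π ^ 2 / 2) * (n : ℝ) ^ (ε / 2) := by
  rw [Real.rpow_def_of_pos (by positivity), ← Real.exp_add]
  gcongr
  linarith [cosineFreq_bandwidth_sq_le hε hn]

theorem one_add_log_bandwidth_le (hε : 0 < ε) (hn : 2 ≤ n) :
    1 + Real.log (bandwidth ε n) ≤ (3 + 2 * ε) * Real.log n := by
  have hn' : (2 : ℝ) ≤ n := Nat.ofNat_le_cast.2 hn
  have hlog := one_le_two_mul_log_of_two_le hn
  have hsqrt : √(ε * Real.log n / 2) * √n ≤ (1 + ε) / 2 * n := by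
    rw [← Real.sqrt_mul (by nlinarith)]
    refine Real.sqrt_le_iff.2 ⟨by positivity, ?_⟩
    calc ε * Real.log n / 2 * n ≤ ε * n / 2 * n := by
          gcongr
          exact Real.log_le_self (by positivity)
      _ ≤ _ := by nlinarith [sq_nonneg ((1 - ε) * n)]
  have hle : (bandwidth ε n : ℝ) ≤ (1 + ε) * n := by
    have hdiv : √(ε * Real.log n / 2) * √n / π ≤ (1 + ε) / 2 * n :=
      (div_le_self (by positivity) (by linarith [Real.pi_gt_three])).trans hsqrt
    nlinarith [bandwidth_le ε n]
  have hlog_le : Real.log (bandwidth ε n) ≤ ε + Real.log n := by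
    calc _ ≤ Real.log ((1 + ε) * n) :=
          Real.log_le_log (by exact_mod_cast (bandwidth_ne_zero hε hn).bot_lt) hle
      _ = Real.log (1 + ε) + Real.log n := Real.log_mul (by positivity) (by positivity)
      _ ≤ ε + Real.log n := by linarith [Real.log_le_sub_one_of_pos (by positivity : 0 < 1 + ε)]
  nlinarith

theorem abs_integral_parabolaEstimator_bandwidth_sub_le (hε : 0 < ε) (hn : 2 ≤ n) {a : ℝ}
    (ha : 0 ≤ a) (han : a ≤ n) {r : ℝ≥0} (hr : (r : ℝ) ≤ n) :
    |∫ x, parabolaEstimator (√n) (√a) (bandwidth ε n) x ∂Po(r) - max (a - r) 0| ≤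
      3 * √(2 / ε) * √(a / Real.log n) := by
  have hlog := one_le_two_mul_log_of_two_le hn
  have hw : 0 < √(ε * Real.log n / 2) := Real.sqrt_pos.2 (by nlinarith)
  have hsum : √a + √r ≤ 2 * √n := by
    linarith [Real.sqrt_le_sqrt han, Real.sqrt_le_sqrt hr]
  have h := abs_integral_parabolaEstimator_sub_le (by positivity) (Real.sqrt_nonneg a) hsum
    (bandwidth_ne_zero hε hn)
  rw [Real.sq_sqrt ha] at h
  refine h.trans ?_
  calc 8 * √a * √n / π ^ 2 / bandwidth ε n
      = 8 / π * (√a / cosineFreq (√n) (bandwidth ε n)) := by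
        rw [cosineFreq]
        field_simp
    _ ≤ 3 * (√a / √(ε * Real.log n / 2)) := by
        gcongr
        · exact div_nonneg (Real.sqrt_nonneg a) (cosineFreq_nonneg (Real.sqrt_nonneg _) _)
        · rw [div_le_iff₀ Real.pi_pos]
          linarith [Real.pi_gt_three]
        · exact sqrt_le_cosineFreq_bandwidth ε (by positivity)
    _ = 3 * √(2 / ε) * √(a / Real.log n) := by
        rw [mul_assoc, ← Real.sqrt_mul (by positivity), ← Real.sqrt_div ha]
        congr 2
        field_simp

theorem variance_parabolaEstimator_bandwidth_le (hε : 0 < ε) (hn : 2 ≤ n) {a : ℝ} (ha : 0 ≤ a)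
    (r : ℝ≥0) :
    Var[parabolaEstimator (√n) (√a) (bandwidth ε n); Po(r)] ≤
      16 * (3 + 2 * ε) ^ 2 * Real.exp (π ^ 2 / 2) * (2 / ε) *
        (a * (Real.log n * (n : ℝ) ^ ε)) := by
  have : 0 ≤ Real.log n := Real.log_natCast_nonneg n
  have hlog_le : Real.log n ≤ (n : ℝ) ^ (ε / 2) / (ε / 2) :=
    Real.log_le_rpow_div n.cast_nonneg (half_pos hε)
  have : 0 ≤ 1 + Real.log (bandwidth ε n) := by
    linarith [Real.log_natCast_nonneg (bandwidth ε n)]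
  calc _ ≤ 16 * √a ^ 2 * (1 + Real.log (bandwidth ε n)) ^ 2 *
        Real.exp (cosineFreq (√n) (bandwidth ε n) ^ 2 / 2) :=
        variance_parabolaEstimator_le (by positivity) (Real.sqrt_nonneg a) _ r
    _ ≤ 16 * a * ((3 + 2 * ε) * Real.log n) ^ 2 *
        (Real.exp (π ^ 2 / 2) * (n : ℝ) ^ (ε / 2)) := by
        rw [Real.sq_sqrt ha]
        gcongr
        · exact one_add_log_bandwidth_le hε hn
        · exact exp_cosineFreq_bandwidth_le hε.le hn
    _ = 16 * (3 + 2 * ε) ^ 2 * Real.exp (π ^ 2 / 2) * a * Real.log n * (n : ℝ) ^ (ε / 2) *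
        Real.log n := by ring
    _ ≤ 16 * (3 + 2 * ε) ^ 2 * Real.exp (π ^ 2 / 2) * a * Real.log n * (n : ℝ) ^ (ε / 2) *
        ((n : ℝ) ^ (ε / 2) / (ε / 2)) := by gcongr
    _ = _ := by
        rw [← add_halves ε, Real.rpow_add (by positivity), add_halves ε]
        ring

theorem exists_posPart_estimator (hε : 0 < ε) : ∃ C > 0, ∀ n : ℕ, 2 ≤ n →
    ∀ a ∈ Set.Icc (0 : ℝ) n, ∃ h : ℕ → ℝ, ∀ r : ℝ≥0, (r : ℝ) ≤ n →
      MemLp h 2 Po(r) ∧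
      |∫ x, h x ∂Po(r) - max (a - r) 0| ≤ C * min a (√(a / Real.log n)) ∧
      Var[h; Po(r)] ≤ C * (a * (Real.log n * (n : ℝ) ^ ε)) := by
  set B := 3 * √(2 / ε)
  set V := 16 * (3 + 2 * ε) ^ 2 * Real.exp (π ^ 2 / 2) * (2 / ε)
  have hB : 0 ≤ B := by positivity
  have hV : 0 ≤ V := by positivity
  refine ⟨1 + B + V, by positivity, fun n hn a ⟨ha, han⟩ ↦ ?_⟩
  have hlog : 0 < Real.log n := by linarith [one_le_two_mul_log_of_two_le hn]
  rcases le_total (a * Real.log n) 1 with hsmall | hlarge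
  · refine ⟨0, fun r _ ↦ ⟨.zero, ?_, ?_⟩⟩
    · have hmin : a ≤ √(a / Real.log n) := by
        refine Real.le_sqrt_of_sq_le ?_
        rw [le_div_iff₀ hlog]
        nlinarith
      have hmax : max (a - r) 0 ≤ a := max_le (sub_le_self a r.coe_nonneg) ha
      rw [min_eq_left hmin]
      simp only [Pi.zero_apply, integral_zero, zero_sub, abs_neg,
        abs_of_nonneg (le_max_right (a - r : ℝ) 0)]
      nlinarith
    · rw [variance_zero]
      positivity
  · refine ⟨parabolaEstimator (√n) (√a) (bandwidth ε n), fun r hr ↦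
      ⟨memLp_parabolaEstimator _ _ _ r, ?_, ?_⟩⟩
    · have hmin : √(a / Real.log n) ≤ a := by
        refine Real.sqrt_le_iff.2 ⟨ha, ?_⟩
        rw [div_le_iff₀ hlog]
        nlinarith
      rw [min_eq_right hmin]
      exact (abs_integral_parabolaEstimator_bandwidth_sub_le hε hn ha han hr).trans
        (by gcongr; linarith)
    · exact (variance_parabolaEstimator_bandwidth_le hε hn ha r).trans (by gcongr; linarith)

end Tuning

section Coordinate

/-- An estimator of `|p - q|` from a Poisson count of mean `n * p`, given an estimator `h` of
`max (n * q - n * p) 0`. It rests on `|p - q| = p - q + 2 * max (q - p) 0`. -/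
noncomputable def absSubEstimator (n q : ℝ) (h : ℕ → ℝ) (x : ℕ) : ℝ :=
  x / n - q + 2 / n * h x

variable {n q : ℝ} {h : ℕ → ℝ} {r : ℝ≥0}

theorem memLp_div_sub_poissonMeasure (n q : ℝ) (r : ℝ≥0) :
    MemLp (fun x : ℕ ↦ x / n - q) 2 Po(r) := by
  simp only [div_eq_mul_inv]
  exact ((memLp_natCast_poissonMeasure r).mul_const n⁻¹).sub (memLp_const q)

theorem memLp_absSubEstimator (hh : MemLp h 2 Po(r)) : MemLp (absSubEstimator n q h) 2 Po(r) :=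
  (memLp_div_sub_poissonMeasure n q r).add (hh.const_mul (2 / n))

theorem integral_absSubEstimator (hh : MemLp h 2 Po(r)) :
    ∫ x, absSubEstimator n q h x ∂Po(r) = r / n - q + 2 / n * ∫ x, h x ∂Po(r) := by
  have hX : Integrable (fun x : ℕ ↦ (x : ℝ) / n) Po(r) :=
    ((memLp_natCast_poissonMeasure r).integrable one_le_two).div_const n
  have hXq : Integrable (fun x : ℕ ↦ x / n - q) Po(r) := hX.sub (integrable_const q)
  simp only [absSubEstimator]
  rw [integral_add hXq ((hh.integrable one_le_two).const_mul _),
    integral_sub hX (integrable_const q), integral_div, integral_natCast_poissonMeasure,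
    integral_const_mul, integral_const, probReal_univ, one_smul]

theorem abs_sub_eq_sub_add_two_mul_max (p q : ℝ) : |p - q| = p - q + 2 * max (q - p) 0 := by
  rcases le_total p q with hpq | hqp
  · rw [abs_of_nonpos (by linarith), max_eq_left (by linarith)]
    ring
  · rw [abs_of_nonneg (by linarith), max_eq_right (by linarith)]
    ring

theorem abs_integral_absSubEstimator_sub (hn : 0 < n) (hh : MemLp h 2 Po(r)) :
    |∫ x, absSubEstimator n q h x ∂Po(r) - abs (r / n - q)| =
      2 / n * |∫ x, h x ∂Po(r) - max (n * q - r) 0| := by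
  have hmax : max (q - r / n) 0 = max (n * q - r) 0 / n := by
    rw [← max_div_div_right hn.le, zero_div, sub_div, mul_div_cancel_left₀ _ hn.ne']
  have hsub : ∫ x, absSubEstimator n q h x ∂Po(r) - abs (r / n - q) =
      2 / n * (∫ x, h x ∂Po(r) - max (n * q - r) 0) := by
    rw [integral_absSubEstimator hh, abs_sub_eq_sub_add_two_mul_max, hmax]
    ring
  rw [hsub, abs_mul, abs_of_pos (by positivity)]

theorem variance_add_le {Ω : Type*} [MeasurableSpace Ω] {μ : Measure Ω} [IsFiniteMeasure μ]
    {X Y : Ω → ℝ} (hX : MemLp X 2 μ) (hY : MemLp Y 2 μ) :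
    Var[X + Y; μ] ≤ 2 * (Var[X; μ] + Var[Y; μ]) := by
  linarith [variance_add hX hY, variance_sub hX hY, variance_nonneg (X - Y) μ]

theorem variance_absSubEstimator_le (hh : MemLp h 2 Po(r)) :
    Var[absSubEstimator n q h; Po(r)] ≤ 2 * r / n ^ 2 + 8 / n ^ 2 * Var[h; Po(r)] := by
  have hX : Var[fun x : ℕ ↦ (x : ℝ) / n - q; Po(r)] = r / n ^ 2 := by
    rw [variance_sub_const .of_discrete]
    simp only [div_eq_mul_inv]
    rw [variance_mul_const, variance_natCast_poissonMeasure, inv_pow]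
  calc _ ≤ 2 * (Var[fun x : ℕ ↦ (x : ℝ) / n - q; Po(r)] + Var[fun x ↦ 2 / n * h x; Po(r)]) :=
        variance_add_le (memLp_div_sub_poissonMeasure n q r) (hh.const_mul (2 / n))
    _ = _ := by
        rw [hX, variance_const_mul]
        ring

theorem log_mul_rpow_div_self {n : ℕ} (hn : n ≠ 0) (ε : ℝ) :
    Real.log n * (n : ℝ) ^ ε / n = Real.log n / (n : ℝ) ^ (1 - ε) := by
  rw [Real.rpow_sub (by positivity), Real.rpow_one]
  field_simp

theorem inv_le_two_mul_log_div_rpow {n : ℕ} (hn : 2 ≤ n) {ε : ℝ} (hε : 0 ≤ ε) :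
    (n : ℝ)⁻¹ ≤ 2 * (Real.log n / (n : ℝ) ^ (1 - ε)) := by
  have hrpow : 1 ≤ (n : ℝ) ^ ε := Real.one_le_rpow (by norm_cast; lia) hε
  have hprod : 1 ≤ 2 * Real.log n * (n : ℝ) ^ ε :=
    one_le_mul_of_one_le_of_one_le (one_le_two_mul_log_of_two_le hn) hrpow
  rw [← log_mul_rpow_div_self (by lia), ← mul_div_assoc, ← mul_assoc, inv_eq_one_div]
  gcongr

theorem min_mul_sqrt_mul_div {n : ℝ} (hn : 0 < n) (q l : ℝ) :
    min (n * q) √(n * q / l) = n * min q √(q / (n * l)) := by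
  have hsqrt : n * q / l = n ^ 2 * (q / (n * l)) := by field_simp
  rw [mul_min_of_nonneg _ _ hn.le, hsqrt, Real.sqrt_mul (sq_nonneg n), Real.sqrt_sq hn.le]

theorem exists_abs_sub_estimator {ε : ℝ} (hε : 0 < ε) : ∃ C > 0, ∀ n : ℕ, 2 ≤ n →
    ∀ q ∈ Set.Icc (0 : ℝ) 1, ∃ f : ℕ → ℝ, ∀ p ∈ Set.Icc (0 : ℝ) 1,
      MemLp f 2 Po((n * p).toNNReal) ∧
      |∫ x, f x ∂Po((n * p).toNNReal) - abs (p - q)| ≤ C * min q (√(q / (n * Real.log n))) ∧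
      Var[f; Po((n * p).toNNReal)] ≤ C * ((p + q) * (Real.log n / (n : ℝ) ^ (1 - ε))) := by
  obtain ⟨C, hC, hposPart⟩ := exists_posPart_estimator hε
  refine ⟨4 + 8 * C, by positivity, fun n hn q ⟨hq, hq₁⟩ ↦ ?_⟩
  have hn₀ : (0 : ℝ) < n := by positivity
  obtain ⟨h, hh⟩ := hposPart n hn (n * q) ⟨by positivity, by nlinarith⟩
  refine ⟨absSubEstimator n q h, fun p ⟨hp, hp₁⟩ ↦ ?_⟩
  set r := (n * p).toNNReal
  have hr : (r : ℝ) = n * p := Real.coe_toNNReal _ (by positivity)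
  obtain ⟨hmem, hbias, hvar⟩ := hh r (by rw [hr]; nlinarith)
  have hrn : r / n = p := by rw [hr, mul_div_cancel_left₀ _ hn₀.ne']
  refine ⟨memLp_absSubEstimator hmem, ?_, ?_⟩
  · rw [← hrn, abs_integral_absSubEstimator_sub hn₀ hmem]
    calc _ ≤ 2 / n * (C * min (n * q) √(n * q / Real.log n)) := by gcongr
      _ = 2 * C * min q √(q / (n * Real.log n)) := by
        rw [min_mul_sqrt_mul_div hn₀]
        field_simp
      _ ≤ _ := by gcongr; linarith
  · calc _ ≤ 2 * r / n ^ 2 + 8 / n ^ 2 * (C * (n * q * (Real.log n * (n : ℝ) ^ ε))) :=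
        (variance_absSubEstimator_le hmem).trans (by gcongr)
      _ = 2 * p * (n : ℝ)⁻¹ + 8 * C * q * (Real.log n / (n : ℝ) ^ (1 - ε)) := by
        rw [hr, ← log_mul_rpow_div_self (by lia)]
        field_simp
      _ ≤ 2 * p * (2 * (Real.log n / (n : ℝ) ^ (1 - ε))) +
          8 * C * q * (Real.log n / (n : ℝ) ^ (1 - ε)) := by
        gcongr
        exact inv_le_two_mul_log_div_rpow hn hε.le
      _ = (4 * p + 8 * C * q) * (Real.log n / (n : ℝ) ^ (1 - ε)) := by ring
      _ ≤ (4 + 8 * C) * ((p + q) * (Real.log n / (n : ℝ) ^ (1 - ε))) := by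
        rw [← mul_assoc]
        gcongr
        nlinarith [mul_nonneg hC.le hp]

end Coordinate

section Sampling

variable {S n : ℕ} {p : Fin S → ℝ}

/-- The law of the observed counts in the Poisson sampling model, as a product measure. The
truncation `Real.toNNReal` is vacuous for a probability vector `p`. -/
noncomputable def poissonSampling (n : ℕ) (p : Fin S → ℝ) : Measure (Fin S → ℕ) :=
  Measure.pi fun i ↦ Po((n * p i).toNNReal)

instance isProbabilityMeasure_poissonSampling (n : ℕ) (p : Fin S → ℝ) :
    IsProbabilityMeasure (poissonSampling n p) :=
  inferInstanceAs (IsProbabilityMeasure (Measure.pi _))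

theorem poissonSampling_singleton (hp : ∀ i, 0 ≤ p i) (x : Fin S → ℕ) :
    poissonSampling n p {x} = ENNReal.ofReal (prodPMF n p x) := by
  have hr (i : Fin S) : ((n * p i).toNNReal : ℝ) = n * p i :=
    Real.coe_toNNReal _ (mul_nonneg n.cast_nonneg (hp i))
  simp only [poissonSampling, Measure.pi_singleton, poissonMeasure_singleton]
  rw [← ENNReal.ofReal_prod_of_nonneg fun i _ ↦ by positivity]
  simp only [hr, prodPMF, _root_.poissonPMF]

theorem risk_eq_lintegral (hp : ∀ i, 0 ≤ p i) (L : ℝ) (est : (Fin S → ℕ) → ℝ) :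
    risk n p L est = ∫⁻ x, ENNReal.ofReal ((est x - L) ^ 2) ∂poissonSampling n p := by
  rw [lintegral_countable', risk]
  refine tsum_congr fun x ↦ ?_
  rw [poissonSampling_singleton hp, ← ENNReal.ofReal_mul (sq_nonneg _), mul_comm]

theorem risk_eq_ofReal_sq_add_variance (hp : ∀ i, 0 ≤ p i) (L : ℝ) {est : (Fin S → ℕ) → ℝ}
    (hest : MemLp est 2 (poissonSampling n p)) :
    risk n p L est = ENNReal.ofReal
      ((∫ x, est x ∂poissonSampling n p - L) ^ 2 + Var[est; poissonSampling n p]) := by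
  have hsq : Integrable (fun x ↦ (est x - L) ^ 2) (poissonSampling n p) :=
    (hest.sub (memLp_const L)).integrable_sq
  rw [risk_eq_lintegral hp, ← integral_sub_const_sq hest,
    ofReal_integral_eq_lintegral_ofReal hsq (.of_forall fun x ↦ sq_nonneg _)]

variable {f : Fin S → ℕ → ℝ}

theorem memLp_comp_eval_poissonSampling (hf : ∀ i, MemLp (f i) 2 Po((n * p i).toNNReal))
    (i : Fin S) : MemLp (fun x ↦ f i (x i)) 2 (poissonSampling n p) :=
  (hf i).comp_measurePreserving (measurePreserving_eval _ i)

theorem memLp_sum_poissonSampling (hf : ∀ i, MemLp (f i) 2 Po((n * p i).toNNReal)) :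
    MemLp (fun x ↦ ∑ i, f i (x i)) 2 (poissonSampling n p) :=
  memLp_finsetSum _ fun i _ ↦ memLp_comp_eval_poissonSampling hf i

theorem integral_sum_poissonSampling (hf : ∀ i, MemLp (f i) 2 Po((n * p i).toNNReal)) :
    ∫ x, ∑ i, f i (x i) ∂poissonSampling n p = ∑ i, ∫ x, f i x ∂Po((n * p i).toNNReal) := by
  rw [integral_finsetSum _ fun i _ ↦
    (memLp_comp_eval_poissonSampling hf i).integrable one_le_two]
  exact Finset.sum_congr rfl fun i _ ↦
    integral_comp_eval (μ := fun i ↦ Po((n * p i).toNNReal)) .of_discrete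

theorem variance_sum_poissonSampling (hf : ∀ i, MemLp (f i) 2 Po((n * p i).toNNReal)) :
    Var[fun x ↦ ∑ i, f i (x i); poissonSampling n p] =
      ∑ i, Var[f i; Po((n * p i).toNNReal)] := by
  simp only [← variance_sum_pi hf, poissonSampling, Finset.sum_fn]

theorem risk_sum_eq (hp : ∀ i, 0 ≤ p i) (hf : ∀ i, MemLp (f i) 2 Po((n * p i).toNNReal)) (L : ℝ) :
    risk n p L (fun x ↦ ∑ i, f i (x i)) = ENNReal.ofReal
      ((∑ i, ∫ x, f i x ∂Po((n * p i).toNNReal) - L) ^ 2 +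
        ∑ i, Var[f i; Po((n * p i).toNNReal)]) := by
  rw [risk_eq_ofReal_sq_add_variance hp L (memLp_sum_poissonSampling hf),
    integral_sum_poissonSampling hf, variance_sum_poissonSampling hf]

theorem IsDist.mem_Icc (hp : IsDist p) (i : Fin S) : p i ∈ Set.Icc (0 : ℝ) 1 :=
  ⟨hp.1 i, hp.2 ▸ Finset.single_le_sum (fun j _ ↦ hp.1 j) (Finset.mem_univ i)⟩

theorem risk_sum_le {q b : Fin S → ℝ} {B V : ℝ} (hp : IsDist p) (hq : IsDist q)
    (hf : ∀ i, MemLp (f i) 2 Po((n * p i).toNNReal))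
    (hbias : ∀ i, |∫ x, f i x ∂Po((n * p i).toNNReal) - abs (p i - q i)| ≤ B * b i)
    (hvar : ∀ i, Var[f i; Po((n * p i).toNNReal)] ≤ B * ((p i + q i) * V)) :
    risk n p (L1dist p q) (fun x ↦ ∑ i, f i (x i)) ≤
      ENNReal.ofReal (B ^ 2 * (∑ i, b i) ^ 2 + 2 * B * V) := by
  have hbias_sum :
      |∑ i, ∫ x, f i x ∂Po((n * p i).toNNReal) - L1dist p q| ≤ B * ∑ i, b i := by
    rw [L1dist, ← Finset.sum_sub_distrib, Finset.mul_sum]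
    exact (Finset.abs_sum_le_sum_abs _ _).trans (Finset.sum_le_sum fun i _ ↦ hbias i)
  have hvar_sum : ∑ i, Var[f i; Po((n * p i).toNNReal)] ≤ 2 * B * V :=
    calc _ ≤ ∑ i, B * ((p i + q i) * V) := Finset.sum_le_sum fun i _ ↦ hvar i
      _ = 2 * B * V := by
        rw [← Finset.mul_sum, ← Finset.sum_mul, Finset.sum_add_distrib, hp.2, hq.2]
        ring
  rw [risk_sum_eq hp.1 hf, ← mul_pow]
  exact ENNReal.ofReal_le_ofReal (add_le_add (sq_le_sq' (abs_le.1 hbias_sum).1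
    (abs_le.1 hbias_sum).2) hvar_sum)

end Sampling

end

theorem optimal_estimator_knownQ_general (ε : ℝ) (hε : 0 < ε) :
    ∃ C : ℝ, 0 < C ∧
      ∀ n : ℕ, 2 ≤ n → ∀ S : ℕ, ∀ q : Fin S → ℝ, IsDist q →
        ∃ est : (Fin S → ℕ) → ℝ,
          ∀ p : Fin S → ℝ, IsDist p →
            risk n p (L1dist p q) est ≤
              ENNReal.ofReal (C *
                ((∑ i, min (q i) (Real.sqrt (q i / (n * Real.log n)))) ^ 2 +
                  Real.log n / (n : ℝ) ^ (1 - ε))) := by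
  obtain ⟨B, hB, hcoord⟩ := exists_abs_sub_estimator hε
  refine ⟨B ^ 2 + 2 * B, by positivity, fun n hn S q hq ↦ ?_⟩
  choose f hf using fun i ↦ hcoord n hn (q i) (hq.mem_Icc i)
  refine ⟨fun x ↦ ∑ i, f i (x i), fun p hp ↦ ?_⟩
  have hfp (i : Fin S) := hf i (p i) (hp.mem_Icc i)
  refine (risk_sum_le hp hq (fun i ↦ (hfp i).1) (fun i ↦ (hfp i).2.1)
    fun i ↦ (hfp i).2.2).trans (ENNReal.ofReal_le_ofReal ?_)
  have : 0 ≤ Real.log n := Real.log_natCast_nonneg n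
  rw [mul_add]
  gcongr
  · exact le_add_of_nonneg_right (by positivity)
  · exact le_add_of_nonneg_left (by positivity)

/-- achievability — for known `Q` there is an estimator whose worst-case risk
is bounded by `C·[(Σᵢ min{qᵢ, √(qᵢ/(n ln n))})² + (ln n)/n^{1-ε} + S/n^β]`. -/
theorem optimal_estimator_knownQ (ε β : ℝ) (hε0 : 0 < ε) (hε1 : ε < 1) (hβ : 0 < β) :
    ∃ C : ℝ, 0 < C ∧
      ∀ n : ℕ, 2 ≤ n → ∀ S : ℕ, 1 ≤ S → ∀ q : Fin S → ℝ, IsDist q →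
        ∃ est : (Fin S → ℕ) → ℝ,
          ∀ p : Fin S → ℝ, IsDist p →
            risk n p (L1dist p q) est ≤
              ENNReal.ofReal (C *
                ((∑ i, min (q i) (Real.sqrt (q i / (n * Real.log n)))) ^ 2 +
                  Real.log n / (n : ℝ) ^ (1 - ε) + S / (n : ℝ) ^ β)) := by
  obtain ⟨C, hC, hgeneral⟩ := optimal_estimator_knownQ_general ε hε0
  refine ⟨C, hC, fun n hn S _ q hq ↦ (hgeneral n hn S q hq).imp fun est hest p hp ↦
    (hest p hp).trans (ENNReal.ofReal_le_ofReal ?_)⟩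
  exact mul_le_mul_of_nonneg_left (le_add_of_nonneg_right (by positivity)) hC.le
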